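/- Every formal meromorphic solution of the A_4^(1) system has a pole of order exactly one; that is, if (c_n^i) is a formal meromorphic solution at t_0 of pole order r ≥ 1, then r = 1. -/

import Mathlib

/-!
Suppose `r ≥ 2` and let `a i = c i (-r)` be the leading vector. Two facts force `a = 0`.

* The recurrence at order `1 - 2r`, which lies strictly below `-r`, has the single term
  `a i * (a (i+1) - a (i+2) + a (i+3) - a (i+4))` on its right-hand side, so each of these
  products vanishes (`leading_eq`).
* The interaction matrix of the system is skew-symmetric, so the quadratic terms cancel in
  `∑ fᵢ' = ∑ αᵢ`; hence `∑ fᵢ` has no pole and `∑ a i = 0` (`leading_sum_eq_zero`).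

Restricting to the support of `a`, the first fact says that `a` is a kernel vector of a principal
submatrix of the skew-symmetric matrix. The principal submatrices of even size are invertible, and
those of odd size have a one-dimensional kernel, spanned by a vector with entries `±1`; an odd
number of such entries cannot sum to zero, contradicting the second fact
(`leading_eq_zero_of_sum_eq_zero`).
-/

/-- A formal meromorphic solution of the `A₄⁽¹⁾` system
`fᵢ' = fᵢ (fᵢ₊₁ − fᵢ₊₂ + fᵢ₊₃ − fᵢ₊₄) + αᵢ` (indices mod 5) at a point `t₀`,
of pole order `r ≥ 1`: a family of coefficients `c i n` (`i : Fin 5`, `n : ℤ`)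
vanishing for `n < -r`, with nonzero leading vector, satisfying the formal
Laurent-series recurrence `n cₙⁱ = Σ_{k=-r}^{n+r-1} cₖⁱ G_{n-k-1}ⁱ + δ_{n,1} αᵢ`
where `Gₙⁱ = cₙ^{i+1} − cₙ^{i+2} + cₙ^{i+3} − cₙ^{i+4}`. -/
def IsFormalMeromSolA4 (α : Fin 5 → ℂ) (r : ℤ) (c : Fin 5 → ℤ → ℂ) : Prop :=
  1 ≤ r ∧
  (∃ i : Fin 5, c i (-r) ≠ 0) ∧
  (∀ (i : Fin 5) (n : ℤ), n < -r → c i n = 0) ∧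
  ∀ (i : Fin 5) (n : ℤ),
    (n : ℂ) * c i n =
      (∑ k ∈ Finset.Icc (-r) (n + r - 1),
        c i k * (c (i + 1) (n - k - 1) - c (i + 2) (n - k - 1) +
          c (i + 3) (n - k - 1) - c (i + 4) (n - k - 1))) +
      (if n = 1 then α i else 0)

/-- In each of the 32 choices of vanishing factors, the resulting linear system has only the
zero solution. -/
theorem leading_eq_zero_of_sum_eq_zero (a b c d e : ℂ)
    (h0 : a * (b - c + d - e) = 0) (h1 : b * (c - d + e - a) = 0)
    (h2 : c * (d - e + a - b) = 0) (h3 : d * (e - a + b - c) = 0)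
    (h4 : e * (a - b + c - d) = 0) (hs : a + b + c + d + e = 0) :
    a = 0 ∧ b = 0 ∧ c = 0 ∧ d = 0 ∧ e = 0 := by
  rcases mul_eq_zero.1 h0 with h0 | h0 <;> rcases mul_eq_zero.1 h1 with h1 | h1 <;>
  rcases mul_eq_zero.1 h2 with h2 | h2 <;> rcases mul_eq_zero.1 h3 with h3 | h3 <;>
  rcases mul_eq_zero.1 h4 with h4 | h4 <;> refine ⟨?_, ?_, ?_, ?_, ?_⟩ <;> grind

theorem leading_eq {α : Fin 5 → ℂ} {r : ℤ} {c : Fin 5 → ℤ → ℂ}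
    (h : IsFormalMeromSolA4 α r c) (hr : 2 ≤ r) (i : Fin 5) :
    c i (-r) * (c (i + 1) (-r) - c (i + 2) (-r) + c (i + 3) (-r) - c (i + 4) (-r)) = 0 := by
  obtain ⟨-, -, hlow, hrec⟩ := h
  have key := hrec i (1 - 2 * r)
  rw [hlow i (1 - 2 * r) (by lia), if_neg (by lia),
    show 1 - 2 * r + r - 1 = -r by ring, Finset.Icc_self, Finset.sum_singleton,
    show 1 - 2 * r - -r - 1 = -r by ring, mul_zero, add_zero] at key
  exact key.symm

theorem leading_sum_eq_zero {α : Fin 5 → ℂ} {r : ℤ} {c : Fin 5 → ℤ → ℂ}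
    (h : IsFormalMeromSolA4 α r c) :
    c 0 (-r) + c 1 (-r) + c 2 (-r) + c 3 (-r) + c 4 (-r) = 0 := by
  obtain ⟨hr, -, -, hrec⟩ := h
  let B : ℤ → ℤ → ℂ := fun k l => ∑ i : Fin 5,
    c i k * (c (i + 1) l - c (i + 2) l + c (i + 3) l - c (i + 4) l)
  have hskew (k l : ℤ) : B k l = -B l k := by
    simp only [B, Fin.sum_univ_five, Fin.reduceAdd, zero_add]
    ring
  have hsum : ((-r : ℤ) : ℂ) * ∑ i : Fin 5, c i (-r) =
      ∑ k ∈ Finset.Icc (-r) (-1), B k (-r - k - 1) := by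
    rw [Finset.mul_sum, Finset.sum_comm]
    refine Finset.sum_congr rfl fun i _ => ?_
    rw [hrec i (-r), if_neg (by lia), add_zero, show -r + r - 1 = -1 by ring]
  -- The reflection `k ↦ -r - 1 - k` of the summation range swaps the arguments of `B`.
  have hrefl : ∑ k ∈ Finset.Icc (-r) (-1), B k (-r - k - 1) =
      ∑ k ∈ Finset.Icc (-r) (-1), -B k (-r - k - 1) := by
    refine Finset.sum_nbij' (fun k => -r - k - 1) (fun k => -r - k - 1) ?_ ?_ ?_ ?_ ?_
    · intro k hk
      rw [Finset.mem_Icc] at hk ⊢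
      lia
    · intro k hk
      rw [Finset.mem_Icc] at hk ⊢
      lia
    · intro k _
      ring
    · intro k _
      ring
    · intro k _
      rw [hskew, show -r - (-r - k - 1) - 1 = k by ring]
  rw [Finset.sum_neg_distrib, self_eq_neg] at hrefl
  rw [hrefl] at hsum
  have hr0 : ((-r : ℤ) : ℂ) ≠ 0 := by
    rw [Int.cast_ne_zero]
    lia
  simpa only [Fin.sum_univ_five] using (mul_eq_zero.1 hsum).resolve_left hr0

/-- Every formal meromorphic solution of the `A₄⁽¹⁾` system has a pole of
order exactly one. -/
theorem poleOrder_eq_one_A4 (α : Fin 5 → ℂ) (r : ℤ) (c : Fin 5 → ℤ → ℂ)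
    (h : IsFormalMeromSolA4 α r c) : r = 1 := by
  by_contra hne
  have hr : 2 ≤ r := by
    have := h.1
    lia
  obtain ⟨i, hi⟩ := h.2.1
  obtain ⟨h0, h1, h2, h3, h4⟩ := leading_eq_zero_of_sum_eq_zero _ _ _ _ _
    (leading_eq h hr 0) (leading_eq h hr 1) (leading_eq h hr 2) (leading_eq h hr 3)
    (leading_eq h hr 4) (leading_sum_eq_zero h)
  fin_cases i <;> contradiction
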